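/- For any network Γ, the subsemigroup S_Γ of Q_Γ is a right ample semigroup with zero element [0]. -/

import Mathlib

/-!
`Q_Γ` is defined by a presentation, so the only difficulty is to prove that certain words are
*not* equal. This is done by letting the generators act from the left on normal forms, each of
which is zero, the adjoined identity, or a source vertex followed by a list of steps. The defining
relations hold for this action (`act_rel`), and applying an element to the identity recovers that
element (`eq_of_actM`), so equality in `Q_Γ` with an identity adjoined can be read off from the
action. Two facts are extracted from it: a path `α` acts injectively, and without producing zero,
on normal forms with source `r(α)`, so that it may be cancelled on the left (`Pth.cancel`); and the
inverse of a nonempty linear path of relations is never equal to an element of `T⁰`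
(`Lin.Iv_ne_vl`).

Deleting redundant vertices shows that the elements of `S_Γ` are zero and the products `αb⁻¹`,
where `α` is any path, not necessarily reduced, and `b` is a nonempty linear path consisting of
relations only, with `r(α) = r(b)` (`mem_Sset_iff`). The product `b⁻¹γ` is zero, or a path
following `r(b)` when `γ` extends `b`, or `b'⁻¹` when `b = γb'` (`Iv_mul_W`). Closure of `S_Γ`
under multiplication follows (`InS.mul`). With cancellation it also follows that the nonzero
idempotents are the elements `bb⁻¹` (`InS.idem`). Two linear paths are comparable as prefixes or
orthogonal, so idempotents commute (`InS.idem_comm`).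

Since `α` is cancellable, `αb⁻¹` is `L*`-related to `bb⁻¹` (`LS_idp`), which gives right
abundance. For `e = bb⁻¹` and `a = γd⁻¹`, either `ea` is zero, or `γ` extends `b` and `ea = a`, or
`b = γb'` and `ea = b(db')⁻¹ = a·(db')(db')⁻¹`. In each case this is the ample identity for one
idempotent in the `L*`-class of `ea` (`InS.ample`), and commuting idempotents leave room for only
one idempotent in each class (`LStar_idem_unique`).
-/

namespace NetworkSemigroup

/-- A network: vertices `V`, relations `T`, with source and range maps assigning to each
relation disjoint nonempty subsets of `V`. -/
structure Network (V T : Type) where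
  s : T → Set V
  r : T → Set V
  s_nonempty : ∀ t, (s t).Nonempty
  r_nonempty : ∀ t, (r t).Nonempty
  disj : ∀ t, s t ∩ r t = ∅

variable {V T : Type}

/-- Membership in `T⁰`: sources and ranges of relations, together with singletons of vertices. -/
def Network.InT0 (N : Network V T) (A : Set V) : Prop :=
  (∃ t, A = N.s t) ∨ (∃ t, A = N.r t) ∨ (∃ v : V, A = {v})

/-- The set `T⁰` as a type. -/
def Network.T0 (N : Network V T) : Type := { A : Set V // N.InT0 A }

/-- The generating set `X = T ∪ T⁰ ∪ T⁻¹ ∪ {0}` of the presentation of `Q_Γ`. -/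
inductive Gen (N : Network V T) : Type
  | pos : T → Gen N
  | neg : T → Gen N
  | ver : N.T0 → Gen N
  | zero : Gen N

namespace Gen

variable {N : Network V T}

/-- The source (as a set of vertices) of a generator. -/
def srcSet : Gen N → Set V
  | .pos t => N.s t
  | .neg t => N.r t
  | .ver A => A.1
  | .zero => ∅

/-- The range (as a set of vertices) of a generator. -/
def rngSet : Gen N → Set V
  | .pos t => N.r t
  | .neg t => N.s t
  | .ver A => A.1
  | .zero => ∅

/-- The source of a generator, as the corresponding element of `T⁰`. -/
def srcGen : Gen N → Gen N
  | .pos t => .ver ⟨N.s t, Or.inl ⟨t, rfl⟩⟩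
  | .neg t => .ver ⟨N.r t, Or.inr (Or.inl ⟨t, rfl⟩)⟩
  | .ver A => .ver A
  | .zero => .zero

/-- The range of a generator, as the corresponding element of `T⁰`. -/
def rngGen : Gen N → Gen N
  | .pos t => .ver ⟨N.r t, Or.inr (Or.inl ⟨t, rfl⟩)⟩
  | .neg t => .ver ⟨N.s t, Or.inl ⟨t, rfl⟩⟩
  | .ver A => .ver A
  | .zero => .zero

end Gen

open FreeSemigroup

/-- The defining relations (NR1)–(NR6) of the presentation of `Q_Γ`, as a binary relation on
the free semigroup over the generators. -/
inductive NRel (N : Network V T) : FreeSemigroup (Gen N) → FreeSemigroup (Gen N) → Prop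
  | nr1l (g : Gen N) (hg : g ≠ .zero) : NRel N (of g.srcGen * of g) (of g)
  | nr1r (g : Gen N) (hg : g ≠ .zero) : NRel N (of g * of g.rngGen) (of g)
  | nr2 (g₁ g₂ : Gen N) (h₁ : g₁ ≠ .zero) (h₂ : g₂ ≠ .zero)
      (h : g₁.rngSet ∩ g₂.srcSet = ∅) : NRel N (of g₁ * of g₂) (of .zero)
  | nr3 (t₁ t₂ : T) (h : t₁ ≠ t₂) :
      NRel N (of (.neg t₁) * of (.pos t₂)) (of .zero)
  | nr4 (t : T) :
      NRel N (of (.neg t) * of (.pos t)) (of (.ver ⟨N.r t, Or.inr (Or.inl ⟨t, rfl⟩)⟩))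
  | nr5 (t : T) (A : N.T0) (h : A.1 ≠ N.s t) :
      NRel N (of (.neg t) * of (.ver A)) (of .zero)
  | nr6l (x : Gen N) : NRel N (of .zero * of x) (of .zero)
  | nr6r (x : Gen N) : NRel N (of x * of .zero) (of .zero)

/-- The congruence on the free semigroup generated by the defining relations. -/
def QCon (N : Network V T) : Con (FreeSemigroup (Gen N)) := conGen (NRel N)

/-- The semigroup `Q_Γ` given by the presentation `⟨X : R⟩`. -/
abbrev QGamma (N : Network V T) : Type := (QCon N).Quotient

/-- The congruence class of a word. -/
def Qofw {N : Network V T} (w : FreeSemigroup (Gen N)) : QGamma N := (w : (QCon N).Quotient)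

/-- The zero element `[0]` of `Q_Γ`. -/
def Qzero (N : Network V T) : QGamma N := Qofw (of .zero)

/-- Path symbols: elements of `T ∪ T⁰`. -/
def PSym (N : Network V T) : Type := T ⊕ N.T0

namespace PSym

variable {N : Network V T}

/-- The source of a path symbol. -/
def src : PSym N → Set V
  | Sum.inl t => N.s t
  | Sum.inr A => A.1

/-- The range of a path symbol. -/
def rng : PSym N → Set V
  | Sum.inl t => N.r t
  | Sum.inr A => A.1

/-- The generator corresponding to a path symbol. -/
def toGen : PSym N → Gen N
  | Sum.inl t => Gen.pos t
  | Sum.inr A => Gen.ver A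

/-- The generator corresponding to the inverse of a path symbol (`t ↦ t⁻¹`, `A ↦ A`). -/
def toInvGen : PSym N → Gen N
  | Sum.inl t => Gen.neg t
  | Sum.inr A => Gen.ver A

/-- The path symbol is the element of `T⁰` given by the set `B`. -/
def IsVerOf : PSym N → Set V → Prop
  | Sum.inl _, _ => False
  | Sum.inr A, B => A.1 = B

end PSym

/-- `L` is a path: a nonempty sequence of elements of `T ∪ T⁰` in which the range of each
symbol meets the source of the next one. -/
def IsPath (N : Network V T) (L : List (PSym N)) : Prop :=
  L ≠ [] ∧ ∀ (i : ℕ) (a b : PSym N), L[i]? = some a → L[i + 1]? = some b →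
    (a.rng ∩ b.src).Nonempty

/-- `L` is linear: the range of each symbol equals the source of the next one. -/
def IsLinear (N : Network V T) (L : List (PSym N)) : Prop :=
  ∀ (i : ℕ) (a b : PSym N), L[i]? = some a → L[i + 1]? = some b → a.rng = b.src

/-- `L = t₁⋯tₙ` is reduced: `t_{n-1} ≠ s(tₙ)` and, for `1 < i < n`,
`t_{i-1} ≠ s(tᵢ)` and `t_{i+1} ≠ r(tᵢ)`. -/
def IsReducedPath (N : Network V T) (L : List (PSym N)) : Prop :=
  (∀ (i : ℕ) (a b : PSym N), L[i]? = some a → L[i + 1]? = some b →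
      i + 2 = L.length → ¬ a.IsVerOf b.src) ∧
  (∀ (i : ℕ) (a b c : PSym N), L[i]? = some a → L[i + 1]? = some b → L[i + 2]? = some c →
      ¬ a.IsVerOf b.src ∧ ¬ c.IsVerOf b.rng)

/-- `RP(Γ)`: reduced paths. -/
def RP (N : Network V T) : Set (List (PSym N)) :=
  { L | IsPath N L ∧ IsReducedPath N L }

/-- `RLP(Γ)`: reduced linear paths. -/
def RLP (N : Network V T) : Set (List (PSym N)) :=
  { L | IsPath N L ∧ IsLinear N L ∧ IsReducedPath N L }

/-- The source `s(α)` of a path. -/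
def pathSrc (N : Network V T) (L : List (PSym N)) : Set V :=
  match L.head? with
  | some a => a.src
  | none => ∅

/-- The range `r(α)` of a path. -/
def pathRng (N : Network V T) (L : List (PSym N)) : Set V :=
  match L.getLast? with
  | some a => a.rng
  | none => ∅

/-- The path is a single symbol from `T⁰` (an "empty path"). -/
def InT0Path (N : Network V T) (L : List (PSym N)) : Prop :=
  ∃ A : N.T0, L = [Sum.inr A]

/-- The word of the free semigroup determined by a nonempty list of generators
(by convention the empty list is sent to the word `0`). -/
def genWord {N : Network V T} : List (Gen N) → FreeSemigroup (Gen N)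
  | [] => of .zero
  | a :: M => ⟨a, M⟩

/-- The word `α` of a path `α`. -/
def word {N : Network V T} (L : List (PSym N)) : FreeSemigroup (Gen N) :=
  genWord (L.map PSym.toGen)

/-- The word `α⁻¹ = tₙ⁻¹⋯t₁⁻¹` of a path `α = t₁⋯tₙ`. -/
def invWord {N : Network V T} (L : List (PSym N)) : FreeSemigroup (Gen N) :=
  genWord (L.reverse.map PSym.toInvGen)

/-- `αβ⁻¹` is in right normal form: `α ∈ RP(Γ)`, `β ∈ RLP(Γ)` and `r(α) = r(β)`. -/
def IsRNF (N : Network V T) (α β : List (PSym N)) : Prop :=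
  α ∈ RP N ∧ β ∈ RLP N ∧ pathRng N α = pathRng N β

/-- The element `[αβ⁻¹]` of `Q_Γ`. -/
def Qrnf (N : Network V T) (α β : List (PSym N)) : QGamma N :=
  Qofw (word α * invWord β)

/-- The relation `L*`: `a L* b` iff for all `x, y ∈ S¹`, `ax = ay ⇔ bx = by`. -/
def LStar {S : Type*} [Semigroup S] (a b : S) : Prop :=
  ∀ x y : WithOne S,
    (a : WithOne S) * x = (a : WithOne S) * y ↔ (b : WithOne S) * x = (b : WithOne S) * y

/-- The relation `R*`: `a R* b` iff for all `x, y ∈ S¹`, `xa = ya ⇔ xb = yb`. -/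
def RStar {S : Type*} [Semigroup S] (a b : S) : Prop :=
  ∀ x y : WithOne S,
    x * (a : WithOne S) = y * (a : WithOne S) ↔ x * (b : WithOne S) = y * (b : WithOne S)

/-- Green's relation `R`: `a R b` iff `aS¹ = bS¹`. -/
def GreenR {S : Type*} [Semigroup S] (a b : S) : Prop :=
  (∃ x : WithOne S, (a : WithOne S) * x = b) ∧ ∃ y : WithOne S, (b : WithOne S) * y = a

/-- Green's relation `L`: `a L b` iff `S¹a = S¹b`. -/
def GreenL {S : Type*} [Semigroup S] (a b : S) : Prop :=
  (∃ x : WithOne S, x * (a : WithOne S) = b) ∧ ∃ y : WithOne S, y * (b : WithOne S) = a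

/-- Green's relation `H = L ∩ R`. -/
def GreenH {S : Type*} [Semigroup S] (a b : S) : Prop :=
  GreenL a b ∧ GreenR a b


/-- The underlying set of the subsemigroup
`S_Γ = {[αβ⁻¹] : α ∈ RP(Γ), β ∈ RLP(Γ)∖T⁰, r(α) = r(β)} ∪ {[0]}` of `Q_Γ`. -/
def Sset (N : Network V T) : Set (QGamma N) :=
  { q | ∃ α β : List (PSym N), α ∈ RP N ∧ β ∈ RLP N ∧ ¬ InT0Path N β ∧
      pathRng N α = pathRng N β ∧ q = Qrnf N α β } ∪ {Qzero N}

/-- A right ample semigroup: right abundant (every `L*`-class contains an idempotent),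
idempotents commute, and `e·a = a·(ea)*` for every element `a` and idempotent `e`
(where `(ea)*` is the idempotent `L*`-related to `ea`). -/
def IsRightAmple (S : Type*) [Semigroup S] : Prop :=
  (∀ a : S, ∃ e : S, IsIdempotentElem e ∧ LStar a e) ∧
  (∀ e f : S, IsIdempotentElem e → IsIdempotentElem f → e * f = f * e) ∧
  (∀ a e : S, IsIdempotentElem e → ∀ g : S, IsIdempotentElem g →
    LStar (e * a) g → e * a = a * g)

/-! ### The letters of the monoid obtained by adjoining an identity -/

/-- The source of a relation as an element of `T⁰`. -/
abbrev Network.S (N : Network V T) (t : T) : N.T0 := ⟨N.s t, Or.inl ⟨t, rfl⟩⟩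

/-- The range of a relation as an element of `T⁰`. -/
abbrev Network.R (N : Network V T) (t : T) : N.T0 := ⟨N.r t, Or.inr (Or.inl ⟨t, rfl⟩)⟩

theorem T0_nonempty {N : Network V T} (A : N.T0) : A.1.Nonempty := by
  rcases A with ⟨A, ⟨t, rfl⟩ | ⟨t, rfl⟩ | ⟨v, rfl⟩⟩
  · exact N.s_nonempty t
  · exact N.r_nonempty t
  · exact Set.singleton_nonempty v

/-- `Q_Γ` with an identity adjoined. An empty product of letters is the adjoined identity, so
words may be handled as products over possibly empty lists. -/
abbrev MGamma (N : Network V T) : Type := WithOne (QGamma N)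

variable {N : Network V T}

/-- The class of a generator, in `MGamma N`. -/
def gl (g : Gen N) : MGamma N := ((Qofw (of g) : QGamma N) : WithOne (QGamma N))

/-- The letter `t`. -/
abbrev pl (N : Network V T) (t : T) : MGamma N := gl (.pos t)

/-- The letter `t⁻¹`. -/
abbrev nl (N : Network V T) (t : T) : MGamma N := gl (.neg t)

/-- The letter `A ∈ T⁰`. -/
abbrev vl (A : N.T0) : MGamma N := gl (.ver A)

/-- The zero `[0]`. -/
abbrev zl (N : Network V T) : MGamma N := gl .zero

theorem Qofw_rel {u w : FreeSemigroup (Gen N)} (h : NRel N u w) :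
    (Qofw u : QGamma N) = Qofw w :=
  (Con.eq _).2 (ConGen.Rel.of _ _ h)

theorem Qofw_mul (u w : FreeSemigroup (Gen N)) :
    (Qofw (u * w) : QGamma N) = Qofw u * Qofw w := rfl

theorem gl_rel2 {a b c : Gen N} (h : NRel N (of a * of b) (of c)) : gl a * gl b = gl c := by
  simp only [gl, ← WithOne.coe_mul, ← Qofw_mul, Qofw_rel h]

theorem vl_vl (A : N.T0) : vl A * vl A = vl A := gl_rel2 (.nr1l (.ver A) (by simp))
theorem vl_pl (t : T) : vl (N.S t) * pl N t = pl N t := gl_rel2 (.nr1l (.pos t) (by simp))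
theorem pl_vl (t : T) : pl N t * vl (N.R t) = pl N t := gl_rel2 (.nr1r (.pos t) (by simp))
theorem vl_nl (t : T) : vl (N.R t) * nl N t = nl N t := gl_rel2 (.nr1l (.neg t) (by simp))
theorem nl_vl (t : T) : nl N t * vl (N.S t) = nl N t := gl_rel2 (.nr1r (.neg t) (by simp))
theorem nl_pl (t : T) : nl N t * pl N t = vl (N.R t) := gl_rel2 (.nr4 t)
theorem nl_pl_ne {t u : T} (h : t ≠ u) : nl N t * pl N u = zl N := gl_rel2 (.nr3 t u h)
theorem nl_vl_ne {t : T} {A : N.T0} (h : A ≠ N.S t) : nl N t * vl A = zl N :=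
  gl_rel2 (.nr5 t A fun h' => h (Subtype.ext h'))
theorem vl_vl_disj {A B : N.T0} (h : A.1 ∩ B.1 = ∅) : vl A * vl B = zl N :=
  gl_rel2 (.nr2 (.ver A) (.ver B) (by simp) (by simp) h)

theorem FreeSemigroup_ind {X : Type*} {P : FreeSemigroup X → Prop} (h1 : ∀ x, P (of x))
    (h2 : ∀ x w, P w → P (of x * w)) (w : FreeSemigroup X) : P w :=
  FreeSemigroup.recOnMul w h1 fun x w _ hw => h2 x w hw

theorem zl_gl (g : Gen N) : zl N * gl g = zl N := gl_rel2 (.nr6l g)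
theorem gl_zl (g : Gen N) : gl g * zl N = zl N := gl_rel2 (.nr6r g)

theorem gl_mul_coe (g : Gen N) (w : FreeSemigroup (Gen N)) :
    ((Qofw (of g * w) : QGamma N) : MGamma N) = gl g * ((Qofw w : QGamma N) : MGamma N) := rfl

/-- An induction principle for `MGamma N`: left multiplication by letters reaches every
element. -/
theorem M_ind {P : MGamma N → Prop} (h1 : P 1) (h2 : ∀ g x, P x → P (gl g * x))
    (x : MGamma N) : P x := by
  induction x using WithOne.recOneCoe with
  | one => exact h1
  | coe q =>
    induction q using Con.induction_on with
    | H w =>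
      change P ((Qofw w : QGamma N) : MGamma N)
      refine FreeSemigroup_ind (P := fun w => P ((Qofw w : QGamma N) : MGamma N))
        (fun g => ?_) (fun g w hw => ?_) w
      · have := h2 g 1 h1
        rwa [mul_one] at this
      · rw [gl_mul_coe]; exact h2 g _ hw

theorem zl_mul (x : MGamma N) : zl N * x = zl N := by
  refine M_ind (P := fun x => zl N * x = zl N) (mul_one _) (fun g x hx => ?_) x
  rw [← mul_assoc, zl_gl, hx]

theorem mul_zl (x : MGamma N) : x * zl N = zl N := by
  refine M_ind (P := fun x => x * zl N = zl N) (one_mul _) (fun g x hx => ?_) x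
  rw [mul_assoc, hx, gl_zl]

/-! ### Normal forms and the left action on them -/

/-- The steps of a normal form after its source vertex: a relation `t`, an inverse `t⁻¹`, or a
jump from `A` to a different element `B` of `T⁰`. Recording both ends of a jump together with
their being distinct makes evaluation of normal forms compatible with the action below without
any further well-formedness invariant. -/
inductive Step (N : Network V T) : Type
  | arr (t : T)
  | inv (t : T)
  | jump (A B : N.T0) (h : A ≠ B)

/-- Normal forms of the elements of `MGamma N`: zero, the adjoined identity, or a source vertex
followed by a list of steps. Only some of these are values of words. -/
inductive St (N : Network V T) : Type
  | zero
  | one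
  | mk (A : N.T0) (L : List (Step N))

open Classical in
/-- The steps following `A` in the normal form of `A · x`; `none` if that product is zero. -/
noncomputable def verL (A : N.T0) : St N → Option (List (Step N))
  | .zero => none
  | .one => some []
  | .mk B L =>
    if A.1 ∩ B.1 = ∅ then none else if h : A = B then some L else some (.jump A B h :: L)

/-- The normal form with a given source and an optional list of steps. -/
def St.ofOpt (A : N.T0) : Option (List (Step N)) → St N
  | none => .zero
  | some L => .mk A L

open Classical in
/-- Left multiplication of a normal form by a letter. -/
noncomputable def act : Gen N → St N → St N
  | .zero, _ => .zero
  | .ver A, x => St.ofOpt A (verL A x)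
  | .pos t, x => St.ofOpt (N.S t) ((verL (N.R t) x).map (.arr t :: ·))
  | .neg _, .zero => .zero
  | .neg t, .one => .mk (N.R t) [.inv t]
  | .neg t, .mk A L =>
    if A = N.S t then
      match L with
      | [] => .mk (N.R t) [.inv t]
      | .arr t' :: L' => if t = t' then .mk (N.R t) L' else .zero
      | .inv t' :: L' => .mk (N.R t) (.inv t :: .inv t' :: L')
      | .jump _ _ _ :: _ => .zero
    else .zero

theorem verL_self (A : N.T0) (L : List (Step N)) : verL A (.mk A L) = some L := by
  simp [verL, (T0_nonempty A).ne_empty]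

theorem verL_ofOpt (A : N.T0) (o : Option (List (Step N))) : verL A (St.ofOpt A o) = o := by
  cases o with
  | none => rfl
  | some L => exact verL_self A L

theorem act_zero (g : Gen N) : act g .zero = .zero := by cases g <;> rfl

@[simp] theorem srcGen_pos (t : T) : (Gen.pos t : Gen N).srcGen = .ver (N.S t) := rfl
@[simp] theorem srcGen_neg (t : T) : (Gen.neg t : Gen N).srcGen = .ver (N.R t) := rfl
@[simp] theorem rngGen_pos (t : T) : (Gen.pos t : Gen N).rngGen = .ver (N.R t) := rfl
@[simp] theorem rngGen_neg (t : T) : (Gen.neg t : Gen N).rngGen = .ver (N.S t) := rfl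

theorem act_srcGen (g : Gen N) (x : St N) : act g.srcGen (act g x) = act g x := by
  cases g with
  | zero => rfl
  | ver A => simp only [act, Gen.srcGen, verL_ofOpt]
  | pos t => simp only [act, srcGen_pos, verL_ofOpt]
  | neg t =>
    have key : act (.neg t) x = .zero ∨ ∃ L, act (.neg t) x = .mk (N.R t) L := by
      rcases x with _ | _ | ⟨A, _ | ⟨⟨t'⟩ | ⟨t'⟩ | ⟨B, C, h⟩, L⟩⟩ <;> simp only [act] <;>
        (repeat' split) <;> simp
    rcases key with h | ⟨L, h⟩
    · rw [h, act_zero]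
    · rw [h]; simp only [act, srcGen_neg, verL_self, St.ofOpt]

theorem act_eq_zero_or (g : Gen N) (x : St N) : act g x = .zero ∨
    ∃ A L, act g x = .mk A L ∧ A.1 = g.srcSet := by
  have key : ∀ (A : N.T0) o, St.ofOpt A o = .zero ∨ ∃ B L, St.ofOpt A o = .mk B L ∧ B.1 = A.1 := by
    intro A o; cases o with
    | none => exact Or.inl rfl
    | some L => exact Or.inr ⟨A, L, rfl, rfl⟩
  rw [← act_srcGen]
  cases g <;> first | exact Or.inl rfl | exact key _ _

theorem act_neg_ver {t : T} {A : N.T0} (h : A ≠ N.S t) (x : St N) :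
    act (.neg t) (act (.ver A) x) = .zero := by
  simp only [act]
  cases verL A x with
  | none => rfl
  | some L => simp [St.ofOpt, h]

/-- The action of a letter, as an element of the monoid of self-maps of the normal forms. -/
noncomputable def actE (g : Gen N) : Function.End (St N) := act g

/-- The defining relations of `Q_Γ` hold for the action on normal forms. -/
theorem act_rel {u w : FreeSemigroup (Gen N)} (h : NRel N u w) :
    FreeSemigroup.lift actE u =
      FreeSemigroup.lift actE w := by
  funext x
  cases h with
  | nr1l g hg => exact act_srcGen g x
  | nr1r g hg =>
    change act g (act g.rngGen x) = act g x
    cases g with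
    | zero => rfl
    | ver A => exact act_srcGen (.ver A) x
    | pos t => simp only [act, rngGen_pos, verL_ofOpt]
    | neg t =>
      rcases x with _ | _ | ⟨A, L⟩
      · rfl
      · simp [act, rngGen_neg, verL, St.ofOpt]
      · by_cases hA : A = N.S t
        · subst hA
          simp only [rngGen_neg]
          congr 1
          simp only [act, verL_self, St.ofOpt]
        · simp only [rngGen_neg]
          by_cases hd : N.s t ∩ A.1 = ∅
          · simp [act, verL, hd, St.ofOpt, hA]
          · have hA' : ¬ N.S t = A := fun h => hA h.symm
            simp [act, verL, hd, St.ofOpt, hA, hA']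
  | nr2 g₁ g₂ h₁ h₂ hd =>
    change act g₁ (act g₂ x) = .zero
    rcases act_eq_zero_or g₂ x with h | ⟨A, L, h, hA⟩
    · rw [h, act_zero]
    · rw [h]
      rw [← hA] at hd
      cases g₁ with
      | zero => rfl
      | ver B => simp only [Gen.rngSet] at hd; simp [act, verL, hd, St.ofOpt]
      | pos t => simp only [Gen.rngSet] at hd; simp [act, verL, hd, St.ofOpt]
      | neg t =>
        have : A ≠ N.S t := by
          rintro rfl
          exact (N.s_nonempty t).ne_empty (by simpa [Gen.rngSet] using hd)
        simp [act, this]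
  | nr3 t₁ t₂ hne =>
    change act (.neg t₁) (act (.pos t₂) x) = .zero
    simp only [act]
    cases verL (N.R t₂) x with
    | none => rfl
    | some L => simp [St.ofOpt, hne]
  | nr4 t =>
    change act (.neg t) (act (.pos t) x) = act (.ver (N.R t)) x
    simp only [act]
    cases verL (N.R t) x with
    | none => rfl
    | some L => simp [St.ofOpt]
  | nr5 t A hA => exact act_neg_ver (fun h => hA (congrArg Subtype.val h)) x
  | nr6l g => rfl
  | nr6r g => exact act_zero g

/-- The action of `MGamma N` on normal forms. -/
noncomputable def actM (N : Network V T) : MGamma N →* Function.End (St N) :=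
  WithOne.lift
    { toFun := fun q => Con.liftOn q (FreeSemigroup.lift actE)
        fun a b h => by
          have : QCon N ≤ Con.ker (FreeSemigroup.lift actE) :=
            Con.conGen_le.2 fun _ _ h => act_rel h
          exact this h
      map_mul' := fun q r => by
        induction q, r using Con.induction_on₂ with
        | H u w => exact map_mul _ u w }

theorem actM_gl (g : Gen N) (x : St N) : actM N (gl g) x = act g x := rfl

theorem actM_mul (a b : MGamma N) (x : St N) : actM N (a * b) x = actM N a (actM N b x) := by
  rw [map_mul]; rfl

/-- The value of a step in `MGamma N`. -/
def Step.val : Step N → MGamma N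
  | .arr t => pl N t
  | .inv t => nl N t
  | .jump A B _ => vl A * vl B

/-- The value of a normal form in `MGamma N`. -/
def St.val : St N → MGamma N
  | .zero => zl N
  | .one => 1
  | .mk A L => vl A * (L.map Step.val).prod

theorem val_ver (A : N.T0) (x : St N) : (act (.ver A) x).val = vl A * x.val := by
  rcases x with _ | _ | ⟨B, L⟩
  · exact (mul_zl _).symm
  · simp [act, verL, St.ofOpt, St.val]
  · by_cases hd : A.1 ∩ B.1 = ∅
    · simp [act, verL, hd, St.ofOpt, St.val, ← mul_assoc, vl_vl_disj hd, zl_mul]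
    · by_cases h : A = B
      · subst h
        simp only [act, verL_self, St.ofOpt, St.val, ← mul_assoc, vl_vl]
      · simp [act, verL, hd, h, St.ofOpt, St.val, ← mul_assoc, vl_vl, Step.val]

theorem val_act (g : Gen N) (x : St N) : (act g x).val = gl g * x.val := by
  cases g with
  | zero => exact (zl_mul _).symm
  | ver A => exact val_ver A x
  | pos t =>
    change _ = pl N t * _
    rw [← pl_vl, mul_assoc, ← val_ver]
    simp only [act]
    cases verL (N.R t) x with
    | none => exact (mul_zl _).symm
    | some L =>
      simp only [Option.map_some, St.ofOpt, St.val, List.map_cons, List.prod_cons, Step.val,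
        ← mul_assoc, vl_pl, pl_vl]
  | neg t =>
    rcases x with _ | _ | ⟨A, L⟩
    · exact (mul_zl _).symm
    · simp [act, St.val, Step.val, vl_nl]
    · by_cases hA : A = N.S t
      · subst hA
        rcases L with _ | ⟨⟨t'⟩ | ⟨t'⟩ | ⟨B, C, h⟩, L⟩
        · simp [act, St.val, Step.val, vl_nl, nl_vl]
        · by_cases ht : t = t'
          · subst ht
            simp [act, St.val, Step.val, ← mul_assoc, nl_vl, nl_pl]
          · simp [act, St.val, Step.val, ← mul_assoc, nl_vl, nl_pl_ne ht, ht, zl_mul]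
        · simp [act, St.val, Step.val, ← mul_assoc, nl_vl, vl_nl]
        · -- The two ends of a jump differ, so one of them is not the source of `t`.
          have : nl N t * (vl B * vl C) = zl N := by
            by_cases hB : B = N.S t
            · subst hB
              rw [← mul_assoc, nl_vl, nl_vl_ne (Ne.symm h)]
            · rw [← mul_assoc, nl_vl_ne hB, zl_mul]
          simp only [act, if_true, St.val, List.map_cons, List.prod_cons, Step.val]
          rw [← mul_assoc, nl_vl, ← mul_assoc, this, zl_mul]
      · simp [act, hA, St.val, ← mul_assoc, nl_vl_ne hA, zl_mul]

theorem val_actM (m : MGamma N) (x : St N) : (actM N m x).val = m * x.val := by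
  refine M_ind (P := fun m => ∀ x : St N, (actM N m x).val = m * x.val) ?_ ?_ m x
  · intro x; rw [map_one, one_mul]; rfl
  · intro g m ih x
    rw [actM_mul, actM_gl, val_act, ih, mul_assoc]

/-- The action on normal forms is faithful. More precisely, an element is determined by its
effect on the adjoined identity. -/
theorem eq_of_actM {a b : MGamma N} (h : actM N a .one = actM N b .one) : a = b := by
  have := congrArg St.val h
  have h1 : (St.one : St N).val = 1 := rfl
  rwa [val_actM, val_actM, h1, mul_one, mul_one] at this

/-! ### Paths and linear paths -/

/-- The source of a path symbol, in `T⁰`. -/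
def symS : PSym N → N.T0
  | .inl t => N.S t
  | .inr A => A

/-- The range of a path symbol, in `T⁰`. -/
def symR : PSym N → N.T0
  | .inl t => N.R t
  | .inr A => A

theorem symS_val (a : PSym N) : (symS a).1 = a.src := by cases a <;> rfl
theorem symR_val (a : PSym N) : (symR a).1 = a.rng := by cases a <;> rfl

/-- A relation as a path symbol. -/
def arrS (N : Network V T) (t : T) : PSym N := Sum.inl t

/-- An element of `T⁰` as a path symbol. -/
def verS (A : N.T0) : PSym N := Sum.inr A

/-- `Pth A L B`: the list `L` is a path, not necessarily reduced, from `A` to `B`. -/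
inductive Pth : N.T0 → List (PSym N) → N.T0 → Prop
  | single (a : PSym N) {A B : N.T0} (hA : A = symS a) (hB : B = symR a) : Pth A [a] B
  | cons (a : PSym N) {A C B : N.T0} {L : List (PSym N)} (hA : A = symS a)
      (hC : ((symR a).1 ∩ C.1).Nonempty) (h : Pth C L B) : Pth A (a :: L) B

/-- `Lin A b B`: the nonempty list `b` of relations is a linear path from `A` to `B`. -/
inductive Lin (N : Network V T) : N.T0 → List T → N.T0 → Prop
  | single (t : T) {A B : N.T0} (hA : A = N.S t) (hB : B = N.R t) : Lin N A [t] B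
  | cons (t : T) {A B : N.T0} {b : List T} (hA : A = N.S t) (h : Lin N (N.R t) b B) :
      Lin N A (t :: b) B

/-- The value of a word of path symbols in `MGamma N`. -/
def W (L : List (PSym N)) : MGamma N := (L.map fun a => gl a.toGen).prod

/-- The value of a word of relations in `MGamma N`. -/
def Wp (N : Network V T) (b : List T) : MGamma N := (b.map fun t => pl N t).prod

/-- The value of the inverse `b⁻¹` of a word `b` of relations in `MGamma N`. -/
def Iv (N : Network V T) (b : List T) : MGamma N := (b.map fun t => nl N t).reverse.prod

@[simp] theorem W_nil : W ([] : List (PSym N)) = 1 := rfl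
@[simp] theorem W_cons (a : PSym N) (L : List (PSym N)) : W (a :: L) = gl a.toGen * W L := by
  simp [W]
@[simp] theorem W_append (L L' : List (PSym N)) : W (L ++ L') = W L * W L' := by simp [W]
@[simp] theorem Wp_nil : Wp N [] = 1 := rfl
@[simp] theorem Wp_cons (t : T) (b : List T) : Wp N (t :: b) = pl N t * Wp N b := by simp [Wp]
@[simp] theorem Wp_append (b c : List T) : Wp N (b ++ c) = Wp N b * Wp N c := by simp [Wp]
@[simp] theorem Iv_nil : Iv N [] = 1 := rfl
@[simp] theorem Iv_cons (t : T) (b : List T) : Iv N (t :: b) = Iv N b * nl N t := by simp [Iv]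
@[simp] theorem Iv_append (b c : List T) : Iv N (b ++ c) = Iv N c * Iv N b := by simp [Iv]

theorem vl_sym (a : PSym N) : vl (symS a) * gl a.toGen = gl a.toGen := by
  cases a with
  | inl t => exact vl_pl t
  | inr A => exact vl_vl A

theorem sym_vl (a : PSym N) : gl a.toGen * vl (symR a) = gl a.toGen := by
  cases a with
  | inl t => exact pl_vl t
  | inr A => exact vl_vl A

theorem Pth.vl_W {A B : N.T0} {L : List (PSym N)} (h : Pth A L B) : vl A * W L = W L := by
  cases h with
  | single a hA hB => subst hA; simp [vl_sym]
  | cons a hA hC h => subst hA; rw [W_cons, ← mul_assoc, vl_sym]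

theorem Pth.W_vl {A B : N.T0} {L : List (PSym N)} (h : Pth A L B) : W L * vl B = W L := by
  induction h with
  | single a hA hB => subst hB; simp [sym_vl]
  | cons a hA hC h ih => rw [W_cons, mul_assoc, ih]

theorem Pth.append {A B C D : N.T0} {L L' : List (PSym N)} (h : Pth A L B) (h' : Pth C L' D)
    (hm : (B.1 ∩ C.1).Nonempty) : Pth A (L ++ L') D := by
  induction h with
  | single a hA hB => subst hB; exact .cons a hA hm h'
  | cons a hA hC h ih => exact .cons a hA hC (ih hm)

theorem Lin.append {A B D : N.T0} {b c : List T} (h : Lin N A b B) (h' : Lin N B c D) :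
    Lin N A (b ++ c) D := by
  induction h with
  | single t hA hB => subst hB; exact .cons t hA h'
  | cons t hA h ih => exact .cons t hA (ih h')

theorem Lin.toPth {A B : N.T0} {b : List T} (h : Lin N A b B) :
    Pth A (b.map (arrS N)) B := by
  induction h with
  | single t hA hB => exact .single _ hA hB
  | cons t hA h ih =>
    refine .cons _ hA ?_ ih
    change (N.r t ∩ N.r t).Nonempty
    rw [Set.inter_self]
    exact N.r_nonempty t

theorem W_map_inl (b : List T) : W (b.map (arrS N)) = Wp N b := by
  induction b with
  | nil => rfl
  | cons t b ih => rw [List.map_cons, W_cons, ih, Wp_cons]; rfl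

theorem Lin.vl_Wp {A B : N.T0} {b : List T} (h : Lin N A b B) : vl A * Wp N b = Wp N b := by
  rw [← W_map_inl]; exact h.toPth.vl_W

theorem Lin.Wp_vl {A B : N.T0} {b : List T} (h : Lin N A b B) : Wp N b * vl B = Wp N b := by
  rw [← W_map_inl]; exact h.toPth.W_vl

theorem Lin.Iv_vl {A B : N.T0} {b : List T} (h : Lin N A b B) : Iv N b * vl A = Iv N b := by
  cases h with
  | single t hA hB => subst hA; simp [nl_vl]
  | cons t hA h => subst hA; rw [Iv_cons, mul_assoc, nl_vl]

theorem Lin.vl_Iv {A B : N.T0} {b : List T} (h : Lin N A b B) : vl B * Iv N b = Iv N b := by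
  induction h with
  | single t hA hB => subst hB; simp [vl_nl]
  | cons t hA h ih => rw [Iv_cons, ← mul_assoc, ih]

theorem Lin.Iv_vl_ne {A B C : N.T0} {b : List T} (h : Lin N A b B) (hC : C ≠ A) :
    Iv N b * vl C = zl N := by
  cases h with
  | single t hA hB => subst hA; simp [nl_vl_ne hC]
  | cons t hA h => subst hA; rw [Iv_cons, mul_assoc, nl_vl_ne hC, mul_zl]

theorem Lin.Iv_Wp {A B : N.T0} {b : List T} (h : Lin N A b B) : Iv N b * Wp N b = vl B := by
  induction h with
  | single t hA hB => subst hB; simp [nl_pl]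
  | cons t hA h ih =>
    rw [Iv_cons, Wp_cons, mul_assoc, ← mul_assoc (nl N t), nl_pl, h.vl_Wp, ih]

/-! ### Cancellation -/

/-- On normal forms with source `r(α)`, left multiplication by a path `α` is injective and never
yields zero: the source becomes `s(α)`, and steps are prepended to the list, never deleted. -/
theorem Pth.actM_eq {A B : N.T0} {L : List (PSym N)} (h : Pth A L B) :
    ∃ F : List (Step N) → List (Step N), Function.Injective F ∧
      ∀ K, actM N (W L) (.mk B K) = .mk A (F K) := by
  -- Prepending one letter whose range meets the source.
  have one : ∀ (a : PSym N) (C : N.T0), ((symR a).1 ∩ C.1).Nonempty →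
      ∃ F : List (Step N) → List (Step N), Function.Injective F ∧
        ∀ K, act a.toGen (.mk C K) = .mk (symS a) (F K) := by
    intro a C hC
    have ver : ∀ D : N.T0, (D.1 ∩ C.1).Nonempty →
        ∃ F : List (Step N) → List (Step N), Function.Injective F ∧
          ∀ K, verL D (.mk C K) = some (F K) := by
      intro D hD
      by_cases hDC : D = C
      · subst hDC
        exact ⟨id, Function.injective_id, fun K => verL_self D K⟩
      · exact ⟨(.jump D C hDC :: ·), List.cons_injective, fun K => by
          simp [verL, hD.ne_empty, hDC]⟩
    obtain ⟨F, hF, hFK⟩ := ver _ hC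
    cases a with
    | inl t =>
      refine ⟨fun K => .arr t :: F K, fun K K' hK => hF (List.cons_injective hK), fun K => ?_⟩
      have : verL (N.R t) (.mk C K) = some (F K) := hFK K
      simp only [PSym.toGen, act, this, Option.map_some, St.ofOpt, symS]
    | inr D =>
      refine ⟨F, hF, fun K => ?_⟩
      have : verL D (.mk C K) = some (F K) := hFK K
      simp only [PSym.toGen, act, this, St.ofOpt, symS]
  induction h with
  | single a hA hB =>
    subst hA hB
    obtain ⟨F, hF, hFK⟩ := one a (symR a) (by rw [Set.inter_self]; exact T0_nonempty _)
    refine ⟨F, hF, fun K => ?_⟩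
    rw [← hFK, W_cons, W_nil, mul_one, actM_gl]
  | cons a hA hC h ih =>
    subst hA
    obtain ⟨F, hF, hFK⟩ := one a _ hC
    obtain ⟨G, hG, hGK⟩ := ih
    refine ⟨F ∘ G, hF.comp hG, fun K => ?_⟩
    rw [W_cons, actM_mul, hGK, actM_gl, hFK]; rfl

/-- A path may be cancelled on the left from products whose right factors have its range as
source. -/
theorem Pth.cancel {A B : N.T0} {L : List (PSym N)} (h : Pth A L B) {x y : MGamma N}
    (hxy : W L * (vl B * x) = W L * (vl B * y)) : vl B * x = vl B * y := by
  apply eq_of_actM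
  obtain ⟨F, hF, hFK⟩ := h.actM_eq
  have key : ∀ u, actM N (vl B * u) .one = .zero ∨ ∃ K, actM N (vl B * u) .one = .mk B K := by
    intro u
    rw [actM_mul, actM_gl]
    simp only [act]
    cases verL B (actM N u .one) with
    | none => exact Or.inl rfl
    | some K => exact Or.inr ⟨K, rfl⟩
  have hz : actM N (W L) .zero = .zero := by
    refine M_ind (P := fun m => actM N m .zero = .zero) (by rw [map_one]; rfl) ?_ (W L)
    intro g m hm
    rw [actM_mul, hm, actM_gl, act_zero]
  have hact := congrArg (fun m => actM N m .one) hxy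
  simp only [actM_mul (W L)] at hact
  rcases key x with hx | ⟨K, hx⟩ <;> rcases key y with hy | ⟨K', hy⟩ <;>
    rw [hx, hy] at hact ⊢ <;> simp only [hz, hFK] at hact
  · exact absurd hact (by simp)
  · exact absurd hact (by simp)
  · simp only [St.mk.injEq, true_and] at hact
    rw [hF hact]

/-- The inverse of a nonempty linear path is not an element of `T⁰`. -/
theorem Lin.Iv_ne_vl {A B C : N.T0} {b : List T} (h : Lin N A b B) : Iv N b ≠ vl C := by
  -- Prepending inverses along a linear path never removes the leading inverse step.
  have key : ∀ {A B : N.T0} {b : List T}, Lin N A b B → ∀ x : St N,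
      (x = .one ∨ ∃ t L, A = N.R t ∧ x = .mk (N.R t) (.inv t :: L)) →
        ∃ t L, actM N (Iv N b) x = .mk (N.R t) (.inv t :: L) := by
    have one : ∀ (t : T) (x : St N),
        (x = .one ∨ ∃ u L, N.S t = N.R u ∧ x = .mk (N.R u) (.inv u :: L)) →
          ∃ L, act (.neg t) x = .mk (N.R t) (.inv t :: L) := by
      rintro t x (rfl | ⟨u, L, hu, rfl⟩)
      · exact ⟨[], rfl⟩
      · exact ⟨.inv u :: L, by rw [← hu]; simp [act]⟩
    intro A B b h
    induction h with
    | single t hA hB =>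
      subst hA
      intro x hx
      obtain ⟨L, hL⟩ := one t x hx
      exact ⟨t, L, by rw [Iv_cons, Iv_nil, one_mul, actM_gl, hL]⟩
    | cons t hA h ih =>
      subst hA
      intro x hx
      obtain ⟨L, hL⟩ := one t x hx
      rw [Iv_cons, actM_mul, actM_gl, hL]
      exact ih _ (Or.inr ⟨t, L, rfl, rfl⟩)
  intro hb
  obtain ⟨t, L, hL⟩ := key h .one (Or.inl rfl)
  rw [hb, actM_gl] at hL
  simp [act, verL, St.ofOpt] at hL

/-! ### Products -/

/-- The product `b⁻¹γ` of the inverse of a linear path with a path: either it vanishes, or `γ`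
begins with `b` up to redundant vertices, or `b` begins with `γ` up to redundant vertices and a
nonempty part of `b` remains. -/
theorem Iv_mul_W {C D : N.T0} {γ : List (PSym N)} (hγ : Pth C γ D) :
    ∀ {A B : N.T0} {b : List T}, Lin N A b B →
      Iv N b * W γ = zl N ∨
      (∃ γ', (γ' = [] ∧ D = B ∨ ∃ E : N.T0, (B.1 ∩ E.1).Nonempty ∧ Pth E γ' D) ∧
        Iv N b * W γ = vl B * W γ' ∧ W γ = Wp N b * W γ') ∨
      ∃ b', Lin N D b' B ∧ Iv N b * W γ = Iv N b' ∧ W γ * Wp N b' = Wp N b := by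
  classical
  -- A leading vertex of `γ` either annihilates `b⁻¹` or is absorbed by it.
  have ver : ∀ {A B E : N.T0} {b : List T}, Lin N A b B →
      Iv N b * vl E = zl N ∨ E = A ∧ Iv N b * vl E = Iv N b := by
    intro A B E b hb
    by_cases hE : E = A
    · subst hE; exact Or.inr ⟨rfl, hb.Iv_vl⟩
    · exact Or.inl (hb.Iv_vl_ne hE)
  -- A leading relation of `γ` other than the first relation of `b` annihilates `b⁻¹`.
  have arr : ∀ {u t : T} {b : List T}, t ≠ u → Iv N (t :: b) * pl N u = zl N := by
    intro u t b htu
    rw [Iv_cons, mul_assoc, nl_pl_ne htu, mul_zl]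
  induction hγ with
  | single a hA hB =>
    intro A B b hb
    subst hA hB
    rcases a with u | E
    · have hW : W [(Sum.inl u : PSym N)] = pl N u := mul_one _
      rw [hW]
      cases hb with
      | single t hA hB =>
        by_cases htu : t = u
        · subst htu hA hB
          refine Or.inr (Or.inl ⟨[], Or.inl ⟨rfl, rfl⟩, ?_, ?_⟩)
          · simp [nl_pl]
          · simp
        · exact Or.inl (arr htu)
      | cons t hA h =>
        rename_i b
        by_cases htu : t = u
        · subst htu
          refine Or.inr (Or.inr ⟨b, h, ?_, ?_⟩)
          · rw [Iv_cons, mul_assoc, nl_pl, h.Iv_vl]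
          · rw [Wp_cons]
        · exact Or.inl (arr htu)
    · have hW : W [(Sum.inr E : PSym N)] = vl E := mul_one _
      rw [hW]
      rcases ver (E := E) hb with h0 | ⟨rfl, h1⟩
      · exact Or.inl h0
      · exact Or.inr (Or.inr ⟨b, hb, h1, hb.vl_Wp⟩)
  | cons a hA hC h ih =>
    rename_i E D γ
    intro A B b hb
    subst hA
    rcases a with u | E
    · have hW : W (Sum.inl u :: γ : List (PSym N)) = pl N u * W γ := W_cons _ _
      rw [hW]
      cases hb with
      | single t hA hB =>
        by_cases htu : t = u
        · subst htu hA hB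
          refine Or.inr (Or.inl ⟨γ, Or.inr ⟨_, hC, h⟩, ?_, ?_⟩)
          · simp [← mul_assoc, nl_pl]
          · simp
        · exact Or.inl (by rw [← mul_assoc, arr htu, zl_mul])
      | cons t hA hb' =>
        rename_i b
        by_cases htu : t = u
        · subst htu
          have hI : Iv N (t :: b) * (pl N t * W γ) = Iv N b * W γ := by
            rw [← mul_assoc, Iv_cons, mul_assoc _ (nl N t), nl_pl, hb'.Iv_vl]
          rw [hI]
          rcases ih hb' with h0 | ⟨γ', hγ', h1, h2⟩ | ⟨b', hb'', h1, h2⟩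
          · exact Or.inl h0
          · exact Or.inr (Or.inl ⟨γ', hγ', h1, by rw [h2, Wp_cons, mul_assoc]⟩)
          · exact Or.inr (Or.inr ⟨b', hb'', h1, by rw [mul_assoc, h2, Wp_cons]⟩)
        · exact Or.inl (by rw [← mul_assoc, arr htu, zl_mul])
    · have hW : W (Sum.inr E :: γ : List (PSym N)) = vl E * W γ := W_cons _ _
      rw [hW, ← mul_assoc]
      rcases ver (E := E) hb with h0 | ⟨rfl, h1⟩
      · exact Or.inl (by rw [h0, zl_mul])
      · rw [h1]
        rcases ih hb with h0 | ⟨γ', hγ', h1, h2⟩ | ⟨b', hb'', h1, h2⟩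
        · exact Or.inl h0
        · exact Or.inr (Or.inl ⟨γ', hγ', h1, by rw [h2, ← mul_assoc, hb.vl_Wp]⟩)
        · exact Or.inr (Or.inr ⟨b', hb'', h1, by rw [mul_assoc, h2, hb.vl_Wp]⟩)

/-- Two linear paths are comparable in the prefix order, or else orthogonal. -/
theorem Lin.compare {A B : N.T0} {b : List T} (hb : Lin N A b B) :
    ∀ {C D : N.T0} {c : List T}, Lin N C c D →
      (∃ d, c = b ++ d) ∨ (∃ d, b = c ++ d) ∨
        Iv N b * Wp N c = zl N ∧ Iv N c * Wp N b = zl N := by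
  have ne : ∀ {t u : T} {b c : List T}, t ≠ u → Iv N (t :: b) * Wp N (u :: c) = zl N := by
    intro t u b c htu
    rw [Iv_cons, Wp_cons, mul_assoc, ← mul_assoc (nl N t), nl_pl_ne htu, zl_mul, mul_zl]
  induction hb with
  | single t hA hB =>
    intro C D c hc
    obtain ⟨u, c, rfl⟩ : ∃ u c', c = u :: c' := by cases hc <;> exact ⟨_, _, rfl⟩
    by_cases htu : t = u
    · subst htu; exact Or.inl ⟨c, rfl⟩
    · exact Or.inr (Or.inr ⟨ne htu, ne (Ne.symm htu)⟩)
  | cons t hA hb ih =>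
    rename_i b
    intro C D c hc
    cases hc with
    | single u hA hB =>
      by_cases htu : t = u
      · subst htu; exact Or.inr (Or.inl ⟨b, rfl⟩)
      · exact Or.inr (Or.inr ⟨ne htu, ne (Ne.symm htu)⟩)
    | cons u hA hc =>
      by_cases htu : t = u
      · subst htu
        rcases ih hc with ⟨d, rfl⟩ | ⟨d, rfl⟩ | ⟨h1, h2⟩
        · exact Or.inl ⟨d, rfl⟩
        · exact Or.inr (Or.inl ⟨d, rfl⟩)
        · refine Or.inr (Or.inr ⟨?_, ?_⟩)
          · rw [Iv_cons, Wp_cons, mul_assoc, ← mul_assoc (nl N t), nl_pl, hc.vl_Wp, h1]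
          · rw [Iv_cons, Wp_cons, mul_assoc, ← mul_assoc (nl N t), nl_pl, hb.vl_Wp, h2]
      · exact Or.inr (Or.inr ⟨ne htu, ne (Ne.symm htu)⟩)

/-! ### Normal words and the elements of `S_Γ` -/

theorem genWord_coe : ∀ {K : List (Gen N)}, K ≠ [] →
    ((Qofw (genWord K) : QGamma N) : MGamma N) = (K.map gl).prod
  | [g], _ => (mul_one _).symm
  | g :: g' :: K, _ => by
    rw [List.map_cons, List.prod_cons, ← genWord_coe (K := g' :: K) (by simp)]
    rfl

/-- The value of `L⁻¹` in `MGamma N`. -/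
def Wi (L : List (PSym N)) : MGamma N := (L.map fun a => gl a.toInvGen).reverse.prod

theorem Wi_cons (a : PSym N) (L : List (PSym N)) : Wi (a :: L) = Wi L * gl a.toInvGen := by
  simp [Wi]

theorem Qrnf_coe {L L' : List (PSym N)} (h : L ≠ []) (h' : L' ≠ []) :
    ((Qrnf N L L' : QGamma N) : MGamma N) = W L * Wi L' := by
  rw [Qrnf, Qofw_mul, WithOne.coe_mul, word, invWord, genWord_coe (by simpa using h),
    genWord_coe (by simpa using h'), List.map_map, List.map_map, List.map_reverse]
  rfl

theorem pathRng_cons_cons (a b : PSym N) (L : List (PSym N)) :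
    pathRng N (a :: b :: L) = pathRng N (b :: L) := by
  simp [pathRng]

theorem exists_Pth : ∀ {L : List (PSym N)}, IsPath N L →
    ∃ A B, Pth A L B ∧ A.1 = pathSrc N L ∧ B.1 = pathRng N L
  | [], h => absurd rfl h.1
  | [a], _ => ⟨symS a, symR a, .single a rfl rfl, symS_val a, symR_val a⟩
  | a :: b :: L, h => by
    obtain ⟨A, B, hP, hA, hB⟩ := exists_Pth (L := b :: L)
      ⟨by simp, fun i x y hx hy => h.2 (i + 1) x y (by simpa using hx) (by simpa using hy)⟩
    refine ⟨symS a, B, .cons a rfl ?_ hP, symS_val a, by rw [hB, pathRng_cons_cons]⟩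
    rw [hA, symR_val]
    exact h.2 0 a b rfl rfl

/-- Consecutive symbols of a path with no redundant vertex on either side. Chains of this
relation have no exceptions for short lists, unlike the reduced paths, and form a subset of
them. -/
def Red (a b : PSym N) : Prop :=
  (a.rng ∩ b.src).Nonempty ∧ ¬ a.IsVerOf b.src ∧ ¬ b.IsVerOf a.rng

theorem mem_RP_of_red {a : PSym N} {L : List (PSym N)} (h : List.IsChain Red (a :: L)) :
    a :: L ∈ RP N := by
  have key : ∀ (i : ℕ) (x y : PSym N), (a :: L)[i]? = some x → (a :: L)[i + 1]? = some y →
      Red x y := by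
    intro i x y hx hy
    obtain ⟨hi, rfl⟩ := List.getElem?_eq_some_iff.1 hx
    obtain ⟨hj, rfl⟩ := List.getElem?_eq_some_iff.1 hy
    exact List.isChain_iff_getElem.1 h i hj
  exact ⟨⟨by simp, fun i x y hx hy => (key i x y hx hy).1⟩,
    fun i x y hx hy _ => (key i x y hx hy).2.1,
    fun i x y w hx hy hw => ⟨(key i x y hx hy).2.1, (key (i + 1) y w hy hw).2.2⟩⟩

/-- Deleting redundant vertices turns any path into a reduced one with the same value and the
same ends. -/
theorem Pth.exists_red {A B : N.T0} {L : List (PSym N)} (h : Pth A L B) :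
    ∃ a L', List.IsChain Red (a :: L') ∧ symS a = A ∧ pathRng N (a :: L') = B.1 ∧
      W (a :: L') = W L := by
  induction h with
  | single a hA hB => exact ⟨a, [], .singleton _, hA.symm, by rw [hB, symR_val]; rfl, rfl⟩
  | cons a hA hC h ih =>
    obtain ⟨b, L', hch, rfl, hr, hW⟩ := ih
    subst hA
    by_cases h1 : a.IsVerOf b.src
    · -- `a` is the source of `b` and is dropped.
      obtain ⟨E, rfl⟩ : ∃ E, a = verS E := by
        rcases a with t | E
        · exact h1.elim
        · exact ⟨E, rfl⟩
      have hE : E = symS b := Subtype.ext (by rw [symS_val]; exact h1)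
      refine ⟨b, L', hch, hE.symm, hr, ?_⟩
      rw [W_cons (verS E), ← hW, W_cons, ← mul_assoc]
      change _ = vl E * _ * _
      rw [hE, vl_sym]
    · by_cases h2 : b.IsVerOf a.rng
      · -- `b` is the range of `a` and is dropped.
        obtain ⟨E, rfl⟩ : ∃ E, b = verS E := by
          rcases b with t | E
          · exact h2.elim
          · exact ⟨E, rfl⟩
        have hE : E = symR a := Subtype.ext (by rw [symR_val]; exact h2)
        have hWa : W (a :: L') = gl a.toGen * W (verS E :: L') := by
          rw [W_cons, W_cons, ← mul_assoc]
          change _ = gl a.toGen * vl E * _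
          rw [hE, sym_vl]
        refine ⟨a, L', ?_, rfl, ?_, by rw [hWa, hW, W_cons]⟩
        · rcases L' with _ | ⟨c, L'⟩
          · exact .singleton _
          · obtain ⟨⟨m, _, n⟩, hch'⟩ := List.isChain_cons_cons.1 hch
            have e : (verS E).rng = a.rng := h2
            refine List.isChain_cons_cons.2 ⟨⟨e ▸ m, ?_, e ▸ n⟩, hch'⟩
            -- If `a` were the source of `c`, it would be `E`, which is the source of `b`.
            intro hac
            rcases a with t | F
            · exact hac
            · exact h1 h2.symm
        · rcases L' with _ | ⟨c, L'⟩
          · rw [← hr]; exact h2.symm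
          · rw [← hr, pathRng_cons_cons, pathRng_cons_cons]
      · refine ⟨a, b :: L', List.isChain_cons_cons.2 ⟨⟨?_, h1, h2⟩, hch⟩, rfl, ?_, ?_⟩
        · rwa [symR_val, symS_val] at hC
        · rw [pathRng_cons_cons, hr]
        · rw [W_cons, hW, W_cons]

/-- Up to redundant vertices, a linear path is an element of `T⁰` or a linear path of
relations. -/
theorem linear_cases : ∀ {L : List (PSym N)}, L ≠ [] → IsLinear N L →
    (∃ A : N.T0, (∀ a ∈ L, a = Sum.inr A) ∧ pathSrc N L = A.1 ∧ pathRng N L = A.1 ∧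
      Wi L = vl A) ∨
    ∃ A B b, Lin N A b B ∧ pathSrc N L = A.1 ∧ pathRng N L = B.1 ∧ Wi L = Iv N b
  | [], h, _ => absurd rfl h
  | [Sum.inr A], _, _ => Or.inl ⟨A, fun _ ha => List.mem_singleton.1 ha, rfl, rfl, mul_one _⟩
  | [Sum.inl t], _, _ => Or.inr ⟨N.S t, N.R t, [t], .single t rfl rfl, rfl, rfl, rfl⟩
  | a :: c :: L, _, h => by
    have hac : a.rng = c.src := h 0 a c rfl rfl
    have ih := linear_cases (L := c :: L) (by simp)
      fun i x y hx hy => h (i + 1) x y (by simpa using hx) (by simpa using hy)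
    have hs : pathSrc N (c :: L) = a.rng := hac.symm
    rw [pathRng_cons_cons, Wi_cons a]
    rcases a with t | E
    · have hn : gl (PSym.toInvGen (Sum.inl t : PSym N)) = nl N t := rfl
      rcases ih with ⟨A, hall, hA, hB, hW⟩ | ⟨A, B, b, hb, hA, hB, hW⟩
      · have : A = N.R t := Subtype.ext (hA.symm.trans hs)
        subst this
        refine Or.inr ⟨N.S t, N.R t, [t], .single t rfl rfl, rfl, hB, ?_⟩
        rw [hW, hn, vl_nl]; simp
      · have : A = N.R t := Subtype.ext (hA.symm.trans hs)
        subst this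
        exact Or.inr ⟨N.S t, B, t :: b, .cons t rfl hb, rfl, hB, by rw [hW, hn, Iv_cons]⟩
    · have hn : gl (PSym.toInvGen (Sum.inr E : PSym N)) = vl E := rfl
      rcases ih with ⟨A, hall, hA, hB, hW⟩ | ⟨A, B, b, hb, hA, hB, hW⟩
      · have : A = E := Subtype.ext (hA.symm.trans hs)
        subst this
        refine Or.inl ⟨A, ?_, rfl, hB, by rw [hW, hn, vl_vl]⟩
        intro x hx
        rcases List.mem_cons.1 hx with rfl | hx
        · rfl
        · exact hall x hx
      · have : A = E := Subtype.ext (hA.symm.trans hs)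
        subst this
        exact Or.inr ⟨A, B, b, hb, rfl, hB, by rw [hW, hn, hb.Iv_vl]⟩

theorem exists_Lin {L : List (PSym N)} (h : L ∈ RLP N) (h0 : ¬ InT0Path N L) :
    ∃ A B b, Lin N A b B ∧ pathRng N L = B.1 ∧ Wi L = Iv N b := by
  obtain ⟨⟨hne, _⟩, hlin, hred⟩ := h
  rcases linear_cases hne hlin with ⟨A, hall, -⟩ | ⟨A, B, b, hb, -, hB, hW⟩
  · exfalso
    -- The last two of several equal vertices violate reducedness.
    have hlen : 2 ≤ L.length := by
      rcases L with _ | ⟨a, _ | ⟨b, L⟩⟩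
      · exact absurd rfl hne
      · exact absurd ⟨A, congrArg (fun x => [x]) (hall a (by simp))⟩ h0
      · simp
    have hget : ∀ i, i < L.length → L[i]? = some (Sum.inr A) := by
      intro i hi
      rw [List.getElem?_eq_getElem hi]
      exact congrArg some (hall _ (List.getElem_mem hi))
    exact hred.1 (L.length - 2) _ _ (hget _ (by omega)) (hget _ (by omega)) (by omega) rfl
  · exact ⟨A, B, b, hb, hB, hW⟩

theorem Wi_map_arrS (b : List T) : Wi (b.map (arrS N)) = Iv N b := by
  simp only [Wi, Iv, List.map_map]
  rfl

theorem Lin.pathRng_eq {A B : N.T0} {b : List T} (h : Lin N A b B) :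
    pathRng N (b.map (arrS N)) = B.1 := by
  induction h with
  | single t hA hB => subst hB; rfl
  | cons t hA h ih =>
    cases h with
    | single u hA hB => exact ih
    | cons u hA h => rw [List.map_cons, List.map_cons, pathRng_cons_cons]; exact ih

theorem Lin.isChain {A B : N.T0} {b : List T} (h : Lin N A b B) :
    List.IsChain (fun x y : PSym N => x.rng = y.src) (b.map (arrS N)) := by
  induction h with
  | single t hA hB => exact .singleton _
  | cons t hA h ih =>
    cases h with
    | single u hA hB => exact .cons_cons (congrArg Subtype.val hA) ih
    | cons u hA h => exact .cons_cons (congrArg Subtype.val hA) ih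

theorem Lin.mem_RLP {A B : N.T0} {b : List T} (h : Lin N A b B) :
    b.map (arrS N) ∈ RLP N ∧ ¬ InT0Path N (b.map (arrS N)) := by
  have hlin : IsLinear N (b.map (arrS N)) := by
    intro i x y hx hy
    obtain ⟨hi, rfl⟩ := List.getElem?_eq_some_iff.1 hx
    obtain ⟨hj, rfl⟩ := List.getElem?_eq_some_iff.1 hy
    exact List.isChain_iff_getElem.1 h.isChain i hj
  have hver : ∀ (i : ℕ) (x : PSym N) (X : Set V), (b.map (arrS N))[i]? = some x →
      ¬ x.IsVerOf X := by
    intro i x X hx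
    obtain ⟨t, -, rfl⟩ := List.mem_map.1 (List.mem_of_getElem? hx)
    exact id
  refine ⟨⟨⟨?_, ?_⟩, hlin, ?_, ?_⟩, ?_⟩
  · cases h <;> simp
  · intro i x y hx hy
    rw [hlin i x y hx hy, Set.inter_self, ← symS_val]
    exact T0_nonempty _
  · exact fun i x y hx _ _ => hver i x _ hx
  · exact fun i x y w hx _ hw => ⟨hver i x _ hx, hver (i + 2) w _ hw⟩
  · rintro ⟨E, hE⟩
    exact hver 0 (verS E) E.1 (by rw [hE]; rfl) rfl

/-- Membership in `S_Γ`, for elements of `MGamma N`: zero, or a product `αb⁻¹` of a path and the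
inverse of a nonempty linear path of relations with the same range. -/
def InS (m : MGamma N) : Prop :=
  m = zl N ∨ ∃ A C B α b, Pth A α B ∧ Lin N C b B ∧ m = W α * Iv N b

theorem exists_mem_Sset {m : MGamma N} (h : InS m) :
    ∃ q ∈ Sset N, ((q : QGamma N) : MGamma N) = m := by
  rcases h with rfl | ⟨A, C, B, α, b, hα, hb, rfl⟩
  · exact ⟨Qzero N, Or.inr rfl, rfl⟩
  · obtain ⟨a, L, hch, -, hr, hW⟩ := hα.exists_red
    have hne : b.map (arrS N) ≠ [] := by cases hb <;> simp
    refine ⟨Qrnf N (a :: L) (b.map (arrS N)), Or.inl ⟨a :: L, b.map (arrS N),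
      mem_RP_of_red hch, hb.mem_RLP.1, hb.mem_RLP.2, hr.trans hb.pathRng_eq.symm, rfl⟩, ?_⟩
    rw [Qrnf_coe (by simp) hne, hW, Wi_map_arrS]

theorem mem_Sset_iff {q : QGamma N} : q ∈ Sset N ↔ InS (q : MGamma N) := by
  constructor
  · rintro (⟨α, β, hα, hβ, hβ0, hr, rfl⟩ | rfl)
    · obtain ⟨A, B, hP, -, hB⟩ := exists_Pth hα.1
      obtain ⟨C, D, b, hb, hD, hW⟩ := exists_Lin hβ hβ0
      have : D = B := Subtype.ext (by rw [hB, hr, hD])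
      subst this
      exact Or.inr ⟨A, C, D, α, b, hP, hb, by rw [Qrnf_coe hα.1.1 hβ.1.1, hW]⟩
    · exact Or.inl rfl
  · intro h
    obtain ⟨q', hq', he⟩ := exists_mem_Sset h
    rwa [← WithOne.coe_inj.1 he]

/-! ### Multiplication and idempotents -/

theorem InS.mul {x y : MGamma N} (hx : InS x) (hy : InS y) : InS (x * y) := by
  rcases hx with rfl | ⟨A, C, B, α, b, hα, hb, rfl⟩
  · exact Or.inl (zl_mul _)
  rcases hy with rfl | ⟨A', C', B', γ, d, hγ, hd, rfl⟩
  · exact Or.inl (mul_zl _)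
  have e : W α * Iv N b * (W γ * Iv N d) = W α * (Iv N b * W γ) * Iv N d := by
    simp only [mul_assoc]
  rw [e]
  rcases Iv_mul_W hγ hb with h0 | ⟨γ', hγ', h1, -⟩ | ⟨b', hb', h1, -⟩
  · exact Or.inl (by rw [h0, mul_zl, zl_mul])
  · right
    rw [h1, ← mul_assoc, hα.W_vl, ← W_append]
    rcases hγ' with ⟨rfl, rfl⟩ | ⟨E, hE, hP⟩
    · exact ⟨A, C', B', α ++ [], d, by simpa using hα, hd, rfl⟩
    · exact ⟨A, C', B', α ++ γ', d, hα.append hP hE, hd, rfl⟩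
  · right
    exact ⟨A, C', B, α, d ++ b', hα, hd.append hb', by rw [h1, Iv_append, mul_assoc]⟩

/-- The element `bb⁻¹`. -/
def idp (N : Network V T) (b : List T) : MGamma N := Wp N b * Iv N b

theorem Lin.Iv_mul_idp {A B : N.T0} {b : List T} (h : Lin N A b B) :
    Iv N b * idp N b = Iv N b := by
  rw [idp, ← mul_assoc, h.Iv_Wp, h.vl_Iv]

theorem Lin.idp_mul_idp {A B : N.T0} {b : List T} (h : Lin N A b B) :
    idp N b * idp N b = idp N b := by
  have : idp N b * idp N b = Wp N b * (Iv N b * idp N b) := mul_assoc _ _ _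
  rw [this, h.Iv_mul_idp, idp]

theorem Lin.inS_idp {A B : N.T0} {b : List T} (h : Lin N A b B) : InS (idp N b) :=
  Or.inr ⟨A, A, B, b.map (arrS N), b, h.toPth, h, by rw [W_map_inl]; rfl⟩

/-- The nonzero idempotents of `S_Γ` are the elements `bb⁻¹`. -/
theorem InS.idem {e : MGamma N} (he : InS e) (hi : e * e = e) :
    e = zl N ∨ ∃ A B b, Lin N A b B ∧ e = idp N b := by
  rcases he with rfl | ⟨A, C, B, α, b, hα, hb, rfl⟩
  · exact Or.inl rfl
  have e : W α * Iv N b * (W α * Iv N b) = W α * (Iv N b * W α) * Iv N b := by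
    simp only [mul_assoc]
  rw [e] at hi
  rcases Iv_mul_W hα hb with h0 | ⟨γ', hγ', h1, h2⟩ | ⟨b', hb', h1, -⟩
  · exact Or.inl (by rw [← hi, h0, mul_zl, zl_mul])
  · refine Or.inr ⟨C, B, b, hb, ?_⟩
    -- Here `α = bγ'`, and cancelling `α` and `b⁻¹` shows that `γ'` is trivial.
    have hend : W γ' * vl B = W γ' ∨ γ' = [] := by
      rcases hγ' with ⟨h, -⟩ | ⟨E, -, hP⟩
      · exact Or.inr h
      · exact Or.inl hP.W_vl
    have hα' : W α * (vl B * W γ') = W α * (vl B * 1) := by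
      rcases hend with hend | rfl
      · have := congrArg (· * Wp N b) hi
        simp only [mul_assoc, h1, hb.Iv_Wp] at this
        rw [hend] at this
        rw [this, mul_one]
      · rfl
    have hγ := hα.cancel hα'
    have hWα : W α = Wp N b := by rw [h2, ← hb.Wp_vl, mul_assoc, hγ, mul_one]
    rw [hWα, idp]
  · -- Here `b` would be a proper extension of itself.
    exfalso
    have hc : W α * (vl B * (Iv N b' * Iv N b)) = W α * (vl B * Iv N b) := by
      rw [← mul_assoc, hα.W_vl, ← mul_assoc, ← h1, hi, ← mul_assoc, hα.W_vl]
    have hc' := hα.cancel hc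
    rw [← mul_assoc, hb'.vl_Iv, hb.vl_Iv] at hc'
    have := congrArg (· * Wp N b) hc'
    simp only [mul_assoc, hb.Iv_Wp] at this
    rw [hb'.Iv_vl] at this
    exact hb'.Iv_ne_vl this

theorem idp_append_comm {A B : N.T0} {b : List T} (hb : Lin N A b B) (d : List T) :
    idp N b * idp N (b ++ d) = idp N (b ++ d) ∧ idp N (b ++ d) * idp N b = idp N (b ++ d) := by
  have h1 : idp N b * Wp N b = Wp N b := by rw [idp, mul_assoc, hb.Iv_Wp, hb.Wp_vl]
  constructor
  · rw [idp.eq_1 N (b ++ d), Wp_append, ← mul_assoc, ← mul_assoc, h1]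
  · rw [idp.eq_1 N (b ++ d), Iv_append, mul_assoc, mul_assoc, hb.Iv_mul_idp]

theorem InS.idem_comm {e f : MGamma N} (he : InS e) (hf : InS f) (hie : e * e = e)
    (hif : f * f = f) : e * f = f * e := by
  rcases he.idem hie with rfl | ⟨A, B, b, hb, rfl⟩
  · rw [zl_mul, mul_zl]
  rcases hf.idem hif with rfl | ⟨C, D, c, hc, rfl⟩
  · rw [zl_mul, mul_zl]
  rcases hb.compare hc with ⟨d, rfl⟩ | ⟨d, rfl⟩ | ⟨h1, h2⟩
  · rw [(idp_append_comm hb d).1, (idp_append_comm hb d).2]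
  · rw [(idp_append_comm hc d).1, (idp_append_comm hc d).2]
  · have k : ∀ {b c : List T}, Iv N b * Wp N c = zl N → idp N b * idp N c = zl N := by
      intro b c h
      rw [idp, idp, mul_assoc, ← mul_assoc (Iv N b), h, zl_mul, mul_zl]
    rw [k h1, k h2]

/-! ### The relation `L*` -/

/-- The defining property of `L*`, with multipliers ranging over all of `MGamma N`. -/
def LS (a b : MGamma N) : Prop := ∀ x y, a * x = a * y ↔ b * x = b * y

/-- The element `αb⁻¹` is `L*`-related to `bb⁻¹`. -/
theorem LS_idp {A C B : N.T0} {α : List (PSym N)} {b : List T} (hα : Pth A α B)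
    (hb : Lin N C b B) : LS (W α * Iv N b) (idp N b) := by
  intro x y
  constructor
  · intro h
    rw [← hb.vl_Iv, mul_assoc, mul_assoc, mul_assoc, mul_assoc] at h
    have := hα.cancel h
    rw [← mul_assoc, ← mul_assoc, hb.vl_Iv] at this
    rw [idp, mul_assoc, mul_assoc, this]
  · intro h
    rw [← hb.Iv_mul_idp]
    simp only [mul_assoc]
    rw [h]

theorem InS.exists_star {a : MGamma N} (ha : InS a) : ∃ e, InS e ∧ e * e = e ∧ LS a e := by
  rcases ha with rfl | ⟨A, C, B, α, b, hα, hb, rfl⟩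
  · exact ⟨zl N, Or.inl rfl, zl_mul _, fun _ _ => Iff.rfl⟩
  · exact ⟨idp N b, hb.inS_idp, hb.idp_mul_idp, LS_idp hα hb⟩

/-- The ample identity, for one idempotent `h` in the `L*`-class of `ea`. -/
theorem InS.ample {a e : MGamma N} (ha : InS a) (he : InS e) (hi : e * e = e) :
    ∃ h, InS h ∧ h * h = h ∧ LS (e * a) h ∧ e * a = a * h := by
  have zero : e * a = zl N → ∃ h, InS h ∧ h * h = h ∧ LS (e * a) h ∧ e * a = a * h := by
    intro h0
    exact ⟨zl N, Or.inl rfl, zl_mul _, by rw [h0]; exact fun _ _ => Iff.rfl, by rw [h0, mul_zl]⟩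
  rcases he.idem hi with rfl | ⟨C, B, b, hb, rfl⟩
  · exact zero (zl_mul _)
  rcases ha with rfl | ⟨A, C', B', γ, d, hγ, hd, rfl⟩
  · exact zero (mul_zl _)
  have e : idp N b * (W γ * Iv N d) = Wp N b * (Iv N b * W γ) * Iv N d := by
    simp only [idp, mul_assoc]
  rcases Iv_mul_W hγ hb with h0 | ⟨γ', hγ', h1, h2⟩ | ⟨b', hb', h1, h2⟩
  · exact zero (by rw [e, h0, mul_zl, zl_mul])
  · -- `γ` extends `b`, so `ea = a`.
    have hea : idp N b * (W γ * Iv N d) = W γ * Iv N d := by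
      rw [e, h1, ← mul_assoc, hb.Wp_vl, ← h2]
    rw [hea]
    exact ⟨idp N d, hd.inS_idp, hd.idp_mul_idp, LS_idp hγ hd, by rw [mul_assoc, hd.Iv_mul_idp]⟩
  · -- `b = γb'`, so `ea = γb'(db')⁻¹` with `L*`-idempotent `db'(db')⁻¹`.
    have hdb := hd.append hb'
    have hea : idp N b * (W γ * Iv N d) = Wp N b * Iv N (d ++ b') := by
      rw [e, h1, Iv_append, mul_assoc]
    rw [hea]
    refine ⟨idp N (d ++ b'), hdb.inS_idp, hdb.idp_mul_idp, ?_, ?_⟩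
    · have := LS_idp hb.toPth hdb
      rwa [W_map_inl] at this
    · rw [idp, Wp_append, ← h2]
      simp only [mul_assoc]
      rw [← mul_assoc (Iv N d), hd.Iv_Wp, ← mul_assoc (vl B'), hb'.vl_Wp]

theorem LStar_of_LS {S : Subsemigroup (QGamma N)} {a b : S}
    (h : LS ((a : QGamma N) : MGamma N) ((b : QGamma N) : MGamma N)) : LStar a b := by
  let ι : WithOne S →* MGamma N := WithOne.mapMulHom (MulMemClass.subtype S)
  have hι : Function.Injective ι := WithOne.mapMulHom_injective Subtype.val_injective
  intro x y
  rw [← hι.eq_iff, ← hι.eq_iff, map_mul, map_mul, map_mul, map_mul]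
  exact h _ _

/-- When idempotents commute, an `L*`-class contains at most one of them. -/
theorem LStar_idem_unique {S : Type*} [Semigroup S]
    (hc : ∀ e f : S, IsIdempotentElem e → IsIdempotentElem f → e * f = f * e)
    {a g h : S} (hg : IsIdempotentElem g) (hh : IsIdempotentElem h) (h1 : LStar a g)
    (h2 : LStar a h) : g = h := by
  have key : ∀ {g h : S}, IsIdempotentElem g → LStar a g → LStar a h → h * g = h := by
    intro g h hg h1 h2
    have e : (g : WithOne S) * (g : WithOne S) = (g : WithOne S) * 1 := by
      rw [mul_one, ← WithOne.coe_mul, hg.eq]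
    have := (h2 _ _).1 ((h1 _ _).2 e)
    rw [mul_one, ← WithOne.coe_mul] at this
    exact WithOne.coe_inj.1 this
  rw [← key hh h2 h1, hc g h hg hh, key hg h1 h2]

/-- for any network `Γ`, `S_Γ` is a subsemigroup of `Q_Γ` which is a right ample
semigroup with zero element `[0]`. -/
theorem SGamma_right_ample (N : Network V T) :
    ∃ Ssub : Subsemigroup (QGamma N), (Ssub : Set (QGamma N)) = Sset N ∧
      IsRightAmple Ssub ∧
      ∃ z : Ssub, (z : QGamma N) = Qzero N ∧ ∀ a : Ssub, z * a = z ∧ a * z = z := by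
  let S : Subsemigroup (QGamma N) :=
    { carrier := Sset N
      mul_mem' := fun {a b} ha hb => by
        rw [mem_Sset_iff] at ha hb ⊢
        exact ha.mul hb }
  have inS : ∀ a : S, InS ((a : QGamma N) : MGamma N) := fun a => mem_Sset_iff.1 a.2
  have lift : ∀ m : MGamma N, InS m → ∃ a : S, ((a : QGamma N) : MGamma N) = m := by
    intro m hm
    obtain ⟨q, hq, hqm⟩ := exists_mem_Sset hm
    exact ⟨⟨q, hq⟩, hqm⟩
  have inj : ∀ {a b : S}, ((a : QGamma N) : MGamma N) = ((b : QGamma N) : MGamma N) → a = b :=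
    fun h => Subtype.ext (WithOne.coe_inj.1 h)
  have mul : ∀ a b : S, ((↑(a * b) : QGamma N) : MGamma N) =
      ((a : QGamma N) : MGamma N) * ((b : QGamma N) : MGamma N) := fun _ _ => rfl
  have idem : ∀ {a : S}, IsIdempotentElem a ↔ ((a : QGamma N) : MGamma N) *
      ((a : QGamma N) : MGamma N) = ((a : QGamma N) : MGamma N) :=
    ⟨fun h => by rw [← mul, h.eq], fun h => inj h⟩
  have comm : ∀ e f : S, IsIdempotentElem e → IsIdempotentElem f → e * f = f * e := by
    intro e f he hf
    exact inj ((inS e).idem_comm (inS f) (idem.1 he) (idem.1 hf))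
  refine ⟨S, rfl, ⟨?_, comm, ?_⟩, ⟨⟨Qzero N, Or.inr rfl⟩, rfl, fun a => ⟨?_, ?_⟩⟩⟩
  · intro a
    obtain ⟨m, hm, hi, hL⟩ := (inS a).exists_star
    obtain ⟨e, rfl⟩ := lift m hm
    exact ⟨e, idem.2 hi, LStar_of_LS hL⟩
  · intro a e he g hg hL
    obtain ⟨m, hm, hi, hL', h⟩ := (inS a).ample (inS e) (idem.1 he)
    obtain ⟨k, rfl⟩ := lift m hm
    obtain rfl : g = k := LStar_idem_unique comm hg (idem.2 hi) hL (LStar_of_LS hL')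
    exact inj h
  · exact inj ((mul _ _).trans (zl_mul _))
  · exact inj ((mul _ _).trans (mul_zl _))

end NetworkSemigroup
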